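/- arXiv:1709.09117 — 2 statements merged into one kernel-verified Lean document; each statement's English description precedes it below -/
import Mathlib

section
/- (Lemma A.1, lower-bound part.) For every y in the unit simplex Δ with all coordinates strictly positive, the Euclidean norm of H(y) = ∇(e^W)(log y) satisfies ‖H(y)‖ ≥ N^{-1} (Σ_{j=1}^N e^{−2 E[ε_j]})^{−1/2}; in particular, inf{‖H(y)‖ : y ∈ Δ, y_i > 0 for all i} > 0. -/
/-!
The map `z ↦ ⨆ i, z i` is 1-Lipschitz, so by Rademacher's theorem it is differentiable at almost
every `v + ε`. Differentiating under the integral sign, `W` is differentiable everywhere. As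
`W (v + t • 1) = W v + t`, the coordinates of `∇(e^W)` add up to `e^W`.

For `v = log y`, the maximum dominates each of its terms, so `W v ≥ log y i + E[ε i]`, that is
`y i ≤ e^W * e^(-E[ε i])`; summing over `i` yields `1 ≤ e^W * ∑ i, e^(-E[ε i])`. Two
applications of Cauchy–Schwarz, to `∑ i, H i` and to `∑ i, e^(-E[ε i])`, give the lower bound. It
does not depend on `y`, so it also bounds the infimum.
-/

open MeasureTheory Real

/-- The surplus function `W(v) = E[max_i (v_i + ε_i)]` of an additive random utility model,
where `μ` is the distribution of the random utility shocks `ε`. -/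
noncomputable def surplus (N : ℕ) (μ : Measure (Fin N → ℝ)) (v : Fin N → ℝ) : ℝ :=
  ∫ x, (⨆ i : Fin N, (v i + x i)) ∂μ

/-- The choice probability `q_i(v) = P(v_i + ε_i ≥ v_j + ε_j for all j)`. -/
noncomputable def choiceProb (N : ℕ) (μ : Measure (Fin N → ℝ)) (v : Fin N → ℝ) (i : Fin N) : ℝ :=
  (μ {x | ∀ j, v j + x j ≤ v i + x i}).toReal

/-- `H(y) = ∇(e^W)(log y)`, i.e. `H_i(e^v) = ∂(e^{W(v)})/∂v_i`. -/
noncomputable def genH (N : ℕ) (μ : Measure (Fin N → ℝ)) (y : Fin N → ℝ) (i : Fin N) : ℝ :=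
  fderiv ℝ (fun v => Real.exp (surplus N μ v)) (fun j => Real.log (y j)) (Pi.single i 1)

/-- The unit simplex `Δ` in `ℝ^N`. -/
def unitSimplex (N : ℕ) : Set (Fin N → ℝ) := {q | (∀ i, 0 ≤ q i) ∧ ∑ i, q i = 1}

/-- The relative interior of the unit simplex `Δ` in `ℝ^N`. -/
def unitSimplexRI (N : ℕ) : Set (Fin N → ℝ) := {q | (∀ i, 0 < q i) ∧ ∑ i, q i = 1}

lemma lipschitzWith_iSup_pi (N : ℕ) [NeZero N] :
    LipschitzWith 1 (fun z : Fin N → ℝ => ⨆ i, z i) := by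
  refine LipschitzWith.of_le_add fun z w => ?_
  refine ciSup_le fun i => ?_
  have h1 : w i ≤ ⨆ i, w i := le_ciSup (Set.finite_range w).bddAbove i
  have h2 : z i - w i ≤ dist z w :=
    (le_abs_self _).trans ((Real.dist_eq _ _).symm.le.trans (dist_le_pi_dist z w i))
  linarith

lemma integrable_iSup_add (N : ℕ) [NeZero N] (μ : Measure (Fin N → ℝ)) [IsProbabilityMeasure μ]
    (hint : ∀ i, Integrable (fun x => x i) μ) (v : Fin N → ℝ) :
    Integrable (fun x => ⨆ i, (v i + x i)) μ := by
  have hx : Integrable (fun x : Fin N → ℝ => v + x) μ :=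
    (integrable_const v).add (Integrable.of_eval hint)
  refine hx.norm.mono' ?_ (ae_of_all _ fun x => ?_)
  · exact ((lipschitzWith_iSup_pi N).continuous.comp
      (continuous_const.add continuous_id)).aestronglyMeasurable
  · have h := (lipschitzWith_iSup_pi N).dist_le_mul (v + x) 0
    simpa using h

/-- Absolute continuity of `μ` is needed here: Rademacher's theorem makes the integrand
differentiable at `v` only for Lebesgue-almost every shock. -/
lemma differentiableAt_surplus (N : ℕ) [NeZero N] (μ : Measure (Fin N → ℝ))
    [IsProbabilityMeasure μ] (hac : μ ≪ volume)
    (hint : ∀ i, Integrable (fun x => x i) μ) (v : Fin N → ℝ) :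
    DifferentiableAt ℝ (surplus N μ) v := by
  set M : (Fin N → ℝ) → ℝ := fun z => ⨆ i, z i with hM
  have hL : LipschitzWith 1 M := lipschitzWith_iSup_pi N
  have hae : ∀ᵐ x ∂(volume : Measure (Fin N → ℝ)), DifferentiableAt ℝ M (v + x) :=
    (measurePreserving_add_left volume v).quasiMeasurePreserving.ae hL.ae_differentiableAt
  have key := hasFDerivAt_integral_of_dominated_loc_of_lip (μ := μ) (𝕜 := ℝ)
    (F := fun w x => M (w + x)) (F' := fun x => fderiv ℝ M (v + x)) (x₀ := v)
    (s := Set.univ) (bound := fun _ => 1) Filter.univ_mem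
    (Filter.Eventually.of_forall fun w => (integrable_iSup_add N μ hint w).aestronglyMeasurable)
    (integrable_iSup_add N μ hint v)
    ((measurable_fderiv ℝ M).comp (measurable_const_add v)).aestronglyMeasurable
    (ae_of_all _ fun x => by
      have h := hL.comp (LipschitzWith.id.add (LipschitzWith.const x))
      simpa [Function.comp_def] using h.lipschitzOnWith (s := Set.univ))
    (integrable_const _)
    (hac.ae_le (hae.mono fun x hx => by
      have h := hx.hasFDerivAt
      exact (hasFDerivAt_comp_add_right x).2 h))
  exact key.2.differentiableAt

lemma surplus_add_const (N : ℕ) [NeZero N] (μ : Measure (Fin N → ℝ)) [IsProbabilityMeasure μ]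
    (hint : ∀ i, Integrable (fun x => x i) μ) (v : Fin N → ℝ) (t : ℝ) :
    surplus N μ (v + t • 1) = surplus N μ v + t := by
  unfold surplus
  have h : ∀ x : Fin N → ℝ, (⨆ i, ((v + t • (1 : Fin N → ℝ)) i + x i)) =
      (⨆ i, (v i + x i)) + t := fun x => by
    rw [ciSup_add (Set.finite_range _).bddAbove]
    congr 1; ext i; simp; ring
  simp_rw [h]
  rw [integral_add (integrable_iSup_add N μ hint v) (integrable_const t)]
  simp

/-- The coordinates of `∇(e^W)` add up to `e^W`, since `e^W` is homogeneous of degree one in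
`e^v`. -/
lemma sum_genH (N : ℕ) [NeZero N] (μ : Measure (Fin N → ℝ)) [IsProbabilityMeasure μ]
    (hac : μ ≪ volume) (hint : ∀ i, Integrable (fun x => x i) μ) (y : Fin N → ℝ) :
    ∑ i, genH N μ y i = Real.exp (surplus N μ (fun j => Real.log (y j))) := by
  set v : Fin N → ℝ := fun j => Real.log (y j) with hv
  have hd : DifferentiableAt ℝ (fun w => Real.exp (surplus N μ w)) v :=
    (differentiableAt_surplus N μ hac hint v).exp
  have h1 : ∑ i, genH N μ y i = fderiv ℝ (fun w => Real.exp (surplus N μ w)) v 1 := by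
    have : (1 : Fin N → ℝ) = ∑ i, Pi.single i 1 := (Finset.univ_sum_single 1).symm
    rw [this, map_sum]; rfl
  have h2 := hd.hasFDerivAt.hasLineDerivAt (1 : Fin N → ℝ)
  have h3 : HasLineDerivAt ℝ (fun w => Real.exp (surplus N μ w))
      (Real.exp (surplus N μ v)) v 1 := by
    unfold HasLineDerivAt
    simp_rw [surplus_add_const N μ hint]
    have := ((hasDerivAt_id (0 : ℝ)).const_add (surplus N μ v)).exp
    simpa using this
  rw [h1]
  exact h2.unique h3

lemma add_integral_le_surplus (N : ℕ) [NeZero N] (μ : Measure (Fin N → ℝ))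
    [IsProbabilityMeasure μ] (hint : ∀ i, Integrable (fun x => x i) μ) (v : Fin N → ℝ)
    (i : Fin N) : v i + ∫ x, x i ∂μ ≤ surplus N μ v := by
  have h : ∫ x, (v i + x i) ∂μ = v i + ∫ x, x i ∂μ := by
    rw [integral_add (integrable_const _) (hint i)]; simp
  rw [← h]
  exact integral_mono ((integrable_const _).add (hint i)) (integrable_iSup_add N μ hint v)
    fun x => le_ciSup (f := fun i => v i + x i) (Set.finite_range _).bddAbove i

/-- Each `y i` is at most `e^(W (log y)) * e^(-E[ε i])`, and the `y i` add up to one. -/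
lemma one_le_exp_surplus_mul (N : ℕ) [NeZero N] (μ : Measure (Fin N → ℝ))
    [IsProbabilityMeasure μ] (hint : ∀ i, Integrable (fun x => x i) μ) (y : Fin N → ℝ)
    (hy : ∀ i, 0 < y i) (hsum : ∑ i, y i = 1) :
    1 ≤ Real.exp (surplus N μ (fun j => Real.log (y j))) *
      ∑ i, Real.exp (-∫ x, x i ∂μ) := by
  rw [← hsum, Finset.mul_sum]
  refine Finset.sum_le_sum fun i _ => ?_
  have h := add_integral_le_surplus N μ hint (fun j => Real.log (y j)) i
  rw [← Real.exp_add]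
  nth_rw 1 [← Real.exp_log (hy i)]
  exact Real.exp_le_exp.2 (by linarith)

lemma genH_bound (N : ℕ) [NeZero N] (μ : Measure (Fin N → ℝ))
    [IsProbabilityMeasure μ] (hac : μ ≪ volume) (hint : ∀ i, Integrable (fun x => x i) μ)
    (y : Fin N → ℝ) (hy : ∀ i, 0 < y i) (hsum : ∑ i, y i = 1) :
    (N : ℝ)⁻¹ * (∑ j, Real.exp (-(2 : ℝ) * ∫ x, x j ∂μ)) ^ (-(1 : ℝ)/2) ≤
        Real.sqrt (∑ j, (genH N μ y j) ^ 2) := by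
  have hN : (0 : ℝ) < N := by exact_mod_cast NeZero.pos N
  have h1 := one_le_exp_surplus_mul N μ hint y hy hsum
  rw [← sum_genH N μ hac hint y] at h1
  set A := ∑ i, genH N μ y i
  set B := ∑ i, Real.exp (-∫ x, x i ∂μ)
  have hA : A ^ 2 ≤ N * ∑ j, (genH N μ y j) ^ 2 := by
    simpa using sq_sum_le_card_mul_sum_sq (s := Finset.univ) (f := genH N μ y)
  have hS : ∑ j, Real.exp (-(2 : ℝ) * ∫ x, x j ∂μ) =
      ∑ j, (Real.exp (-∫ x, x j ∂μ)) ^ 2 := by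
    refine Finset.sum_congr rfl fun j _ => ?_
    rw [← Real.exp_nat_mul]; congr 1; push_cast; ring
  have hB : B ^ 2 ≤ N * ∑ j, Real.exp (-(2 : ℝ) * ∫ x, x j ∂μ) := by
    rw [hS]
    simpa using sq_sum_le_card_mul_sum_sq (s := Finset.univ)
      (f := fun i => Real.exp (-∫ x, x i ∂μ))
  have hSpos : 0 < ∑ j, Real.exp (-(2 : ℝ) * ∫ x, x j ∂μ) :=
    Finset.sum_pos (fun j _ => Real.exp_pos _) Finset.univ_nonempty
  set S := ∑ j, Real.exp (-(2 : ℝ) * ∫ x, x j ∂μ)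
  set Q := ∑ j, (genH N μ y j) ^ 2
  have hQ : 0 ≤ Q := Finset.sum_nonneg fun j _ => sq_nonneg _
  have hprod : 1 ≤ (N : ℝ) ^ 2 * Q * S := by
    calc (1 : ℝ) ≤ (A * B) ^ 2 := one_le_pow₀ h1
      _ = A ^ 2 * B ^ 2 := mul_pow _ _ _
      _ ≤ (N * Q) * (N * S) := mul_le_mul hA hB (sq_nonneg _) (by positivity)
      _ = (N : ℝ) ^ 2 * Q * S := by ring
  rw [show (-(1 : ℝ) / 2) = -(1 / 2) by ring, Real.rpow_neg hSpos.le, ← Real.sqrt_eq_rpow]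
  refine Real.le_sqrt_of_sq_le ?_
  rw [mul_pow, inv_pow, inv_pow, Real.sq_sqrt hSpos.le, ← mul_inv]
  rw [inv_le_iff_one_le_mul₀ (by positivity)]
  linarith

/-- Lemma A.1, lower-bound part: for every `y` in the unit simplex `Δ` with all
coordinates strictly positive, the Euclidean norm of `H(y) = ∇(e^W)(log y)` satisfies
`‖H(y)‖ ≥ N⁻¹ (∑_j e^{−2E[ε_j]})^{−1/2}`; in particular
`inf {‖H(y)‖ : y ∈ Δ, y_i > 0 ∀ i} > 0`. -/
theorem genH_norm_lower_bound (N : ℕ) (hN : 2 ≤ N) (μ : Measure (Fin N → ℝ))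
    (hprob : IsProbabilityMeasure μ) (hac : μ ≪ volume)
    (hsupp : ∀ U : Set (Fin N → ℝ), IsOpen U → U.Nonempty → 0 < μ U)
    (hint : ∀ i, Integrable (fun x => x i) μ) :
    (∀ y : Fin N → ℝ, y ∈ unitSimplex N → (∀ i, 0 < y i) →
      (N : ℝ)⁻¹ * (∑ j, Real.exp (-(2 : ℝ) * ∫ x, x j ∂μ)) ^ (-(1 : ℝ)/2) ≤
        Real.sqrt (∑ j, (genH N μ y j) ^ 2)) ∧
    (0 < sInf {r : ℝ | ∃ y : Fin N → ℝ, y ∈ unitSimplex N ∧ (∀ i, 0 < y i) ∧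
        r = Real.sqrt (∑ j, (genH N μ y j) ^ 2)}) := by
  have : NeZero N := ⟨by omega⟩
  have hN0 : (0 : ℝ) < N := by exact_mod_cast NeZero.pos N
  have hb : ∀ y : Fin N → ℝ, y ∈ unitSimplex N → (∀ i, 0 < y i) →
      (N : ℝ)⁻¹ * (∑ j, Real.exp (-(2 : ℝ) * ∫ x, x j ∂μ)) ^ (-(1 : ℝ)/2) ≤
        Real.sqrt (∑ j, (genH N μ y j) ^ 2) :=
    fun y hy hpos => genH_bound N μ hac hint y hpos hy.2
  refine ⟨hb, ?_⟩
  have hSpos : 0 < ∑ j, Real.exp (-(2 : ℝ) * ∫ x, x j ∂μ) :=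
    Finset.sum_pos (fun j _ => Real.exp_pos _) Finset.univ_nonempty
  refine lt_of_lt_of_le (mul_pos (inv_pos.2 hN0) (Real.rpow_pos_of_pos hSpos (-(1 : ℝ)/2)))
    (le_csInf ?_ ?_)
  -- The barycentre shows that the set is nonempty (`sInf ∅ = 0` would not be positive).
  · refine ⟨_, fun _ => (N : ℝ)⁻¹, ⟨fun _ => by positivity, ?_⟩, fun _ => by positivity, rfl⟩
    simp [hN0.ne']
  · rintro r ⟨y, hy, hpos, rfl⟩
    exact hb y hy hpos
end

section
/- (Corollary 1.) Let S be a right inverse of H. Suppose option a ∈ {1,…,N} satisfies: for every v ∈ 𝒱 and every i, v_a ≤ v_i, and there exists v ∈ 𝒱 with μ(v) > 0 such that v_a < v_i for all i ≠ a. Then no vector p⁰ in the relative interior of Δ satisfies the GERI fixed-point equation p⁰ = Σ_{v ∈ 𝒱} μ(v) ∇W(v + log S(p⁰)); that is, any solution of the GERI model must put unconditional probability zero on option a. -/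
/-! The gradient of the surplus is the vector of choice probabilities (Williams–Daly–Zachary,
`hasFDerivAt_surplus`): ties have probability zero because the shocks have a density, and away
from ties the maximum is locally the coordinate `v ↦ v k + x k` of the unique best option `k`.
Choice probabilities sum to one (`sum_choiceProb`).

Put `u = log S(p⁰)`. The right-inverse property reads `exp (W u) * q_i(u) = p⁰_i`; summing over `i`
gives `exp (W u) = 1`, hence `p⁰_a = q_a(u)`. Adding a payoff vector `v` for which option `a` is
weakly worst can only shrink the event that `a` is optimal (`choiceProb_add_le`), and when `a` is
strictly worse than some other option the event loses a nonempty open set, which has positive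
probability by full support (`choiceProb_add_lt`). Averaging over `v` makes the right-hand side of
the fixed-point equation at `a` strictly smaller than `q_a(u) = p⁰_a`. -/

open MeasureTheory Real

/-- In the sup norm the maximum of the coordinates is `1`-Lipschitz. -/
lemma lipschitzWith_iSup_coord {N : ℕ} [Nonempty (Fin N)] :
    LipschitzWith 1 (fun y : Fin N → ℝ => ⨆ i, y i) := by
  refine LipschitzWith.of_le_add fun x y => ciSup_le fun i => ?_
  have h1 : y i ≤ ⨆ i, y i := le_ciSup (Set.finite_range y).bddAbove i
  have h2 : dist (x i) (y i) ≤ dist x y := dist_le_pi_dist x y i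
  rw [Real.dist_eq] at h2
  linarith [le_abs_self (x i - y i)]

/-- The event that option `i` is optimal at the payoff vector `v`. -/
def bestSet {N : ℕ} (v : Fin N → ℝ) (i : Fin N) : Set (Fin N → ℝ) :=
  {x | ∀ j, v j + x j ≤ v i + x i}

lemma measurableSet_bestSet {N : ℕ} (v : Fin N → ℝ) (i : Fin N) :
    MeasurableSet (bestSet v i) := by
  have h : bestSet v i = ⋂ j, {x | v j + x j ≤ v i + x i} := by
    ext x; simp [bestSet]
  rw [h]
  exact MeasurableSet.iInter fun j => measurableSet_le (by fun_prop) (by fun_prop)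

/-- Ties are null for Lebesgue measure: they form a translate of a hyperplane. -/
lemma volume_tie {N : ℕ} (v : Fin N → ℝ) {i j : Fin N} (hij : i ≠ j) :
    volume {x : Fin N → ℝ | v i + x i = v j + x j} = 0 := by
  let s : Submodule ℝ (Fin N → ℝ) :=
    LinearMap.ker
      ((LinearMap.proj i : (Fin N → ℝ) →ₗ[ℝ] ℝ) - (LinearMap.proj j : (Fin N → ℝ) →ₗ[ℝ] ℝ))
  have hs : s ≠ ⊤ := by
    intro h
    have hm : (Pi.single i 1 : Fin N → ℝ) ∈ s := h ▸ Submodule.mem_top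
    simp [s, LinearMap.mem_ker, hij.symm] at hm
  have h0 := Measure.addHaar_submodule (volume : Measure (Fin N → ℝ)) s hs
  rw [← measure_preimage_add_right volume v] at h0
  convert h0 using 2
  ext x
  simp only [s, Set.mem_ofPred_eq, Set.mem_preimage, SetLike.mem_coe, LinearMap.mem_ker,
    LinearMap.sub_apply, LinearMap.proj_apply, Pi.add_apply, sub_eq_zero, add_comm]

/-- Almost surely exactly one option is optimal, and it is strictly better than all others. -/
lemma ae_exists_unique_best {N : ℕ} [Nonempty (Fin N)] {μ : Measure (Fin N → ℝ)}
    (hac : μ ≪ volume) (v : Fin N → ℝ) :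
    ∀ᵐ x ∂μ, ∃ k, ∀ j, j ≠ k → v j + x j < v k + x k := by
  have h : ∀ᵐ x ∂μ, ∀ i j : Fin N, i ≠ j → v i + x i ≠ v j + x j := by
    rw [ae_all_iff]; intro i
    rw [ae_all_iff]; intro j
    by_cases hij : i = j
    · simp [hij]
    · have := hac (volume_tie v hij)
      filter_upwards [measure_eq_zero_iff_ae_notMem.1 this] with x hx _ using hx
  filter_upwards [h] with x hx
  obtain ⟨k, hk⟩ := Finite.exists_max (fun i => v i + x i)
  exact ⟨k, fun j hj => lt_of_le_of_ne (hk j) (hx j k hj)⟩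

lemma mem_bestSet_iff {N : ℕ} {v x : Fin N → ℝ} {k : Fin N}
    (hk : ∀ j, j ≠ k → v j + x j < v k + x k) (i : Fin N) : x ∈ bestSet v i ↔ i = k := by
  constructor
  · intro h
    by_contra hik
    exact absurd (hk i hik) (not_lt.2 (h k))
  · rintro rfl j
    by_cases hj : j = i
    · rw [hj]
    · exact (hk j hj).le

lemma sum_indicator_bestSet {N : ℕ} {E : Type*} [AddCommMonoid E] {v x : Fin N → ℝ} {k : Fin N}
    (hk : ∀ j, j ≠ k → v j + x j < v k + x k) (c : Fin N → E) :
    ∑ i, (bestSet v i).indicator (fun _ => c i) x = c k := by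
  rw [Finset.sum_eq_single k]
  · exact Set.indicator_of_mem ((mem_bestSet_iff hk k).2 rfl) _
  · intro i _ hi
    exact Set.indicator_of_notMem (fun h => hi ((mem_bestSet_iff hk i).1 h)) _
  · simp

lemma integral_sum_indicator_bestSet {N : ℕ} {E : Type*} [NormedAddCommGroup E] [NormedSpace ℝ E]
    [CompleteSpace E] (μ : Measure (Fin N → ℝ)) [IsProbabilityMeasure μ] (v : Fin N → ℝ)
    (c : Fin N → E) :
    ∫ x, ∑ i, (bestSet v i).indicator (fun _ => c i) x ∂μ = ∑ i, choiceProb N μ v i • c i := by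
  rw [integral_finsetSum]
  · refine Finset.sum_congr rfl fun i _ => ?_
    rw [integral_indicator_const _ (measurableSet_bestSet v i)]
    rfl
  · intro i _
    exact (integrable_const _).indicator (measurableSet_bestSet v i)

lemma sum_choiceProb {N : ℕ} [Nonempty (Fin N)] (μ : Measure (Fin N → ℝ))
    [IsProbabilityMeasure μ] (hac : μ ≪ volume) (v : Fin N → ℝ) :
    ∑ i, choiceProb N μ v i = 1 := by
  have h := integral_sum_indicator_bestSet μ v (fun _ => (1 : ℝ))
  simp only [smul_eq_mul, mul_one] at h
  rw [← h, integral_congr_ae (g := fun _ => (1 : ℝ))]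
  · simp
  · filter_upwards [ae_exists_unique_best hac v] with x ⟨k, hk⟩
    exact sum_indicator_bestSet hk _

/-- Williams–Daly–Zachary: the gradient of the surplus is the vector of choice probabilities. -/
lemma hasFDerivAt_surplus {N : ℕ} [Nonempty (Fin N)] (μ : Measure (Fin N → ℝ))
    [IsProbabilityMeasure μ] (hac : μ ≪ volume) (hint : ∀ i, Integrable (fun x => x i) μ)
    (v : Fin N → ℝ) :
    HasFDerivAt (surplus N μ)
      (∑ i, choiceProb N μ v i • (ContinuousLinearMap.proj i : (Fin N → ℝ) →L[ℝ] ℝ)) v := by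
  have hL := lipschitzWith_iSup_coord (N := N)
  have hmeas : ∀ v' : Fin N → ℝ,
      AEStronglyMeasurable (fun x : Fin N → ℝ => ⨆ i, (v' i + x i)) μ := fun v' =>
    (hL.continuous.comp (continuous_const.add continuous_id :
      Continuous fun x : Fin N → ℝ => v' + x)).aestronglyMeasurable
  have hid : Integrable (fun x : Fin N → ℝ => x) μ := Integrable.of_eval hint
  rw [← integral_sum_indicator_bestSet μ v
    (fun i => (ContinuousLinearMap.proj i : (Fin N → ℝ) →L[ℝ] ℝ))]
  refine (hasFDerivAt_integral_of_dominated_loc_of_lip (bound := fun _ => 1)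
    (F := fun (v' x : Fin N → ℝ) => ⨆ i, (v' i + x i)) Filter.univ_mem
    (Filter.Eventually.of_forall hmeas) ?_ ?_ ?_ (integrable_const _) ?_).2
  · refine Integrable.mono' ((integrable_const ‖v‖).add hid.norm) (hmeas v) ?_
    refine Filter.Eventually.of_forall fun x => ?_
    have h := hL.norm_sub_le (v + x) 0
    simp only [Pi.zero_apply, ciSup_const, sub_zero, NNReal.coe_one, one_mul] at h
    exact h.trans (norm_add_le v x)
  · refine (Finset.aestronglyMeasurable_fun_sum _ fun i _ => ?_)
    exact aestronglyMeasurable_const.indicator (measurableSet_bestSet v i)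
  · refine Filter.Eventually.of_forall fun x => ?_
    refine LipschitzOnWith.of_dist_le_mul fun y _ z _ => ?_
    have h := hL.dist_le_mul (y + x) (z + x)
    rw [dist_add_right] at h
    simpa using h
  · filter_upwards [ae_exists_unique_best hac v] with x ⟨k, hk⟩
    rw [sum_indicator_bestSet hk]
    have h1 : HasFDerivAt (fun v' : Fin N → ℝ => v' k + x k)
        (ContinuousLinearMap.proj k : (Fin N → ℝ) →L[ℝ] ℝ) v :=
      (ContinuousLinearMap.proj k : (Fin N → ℝ) →L[ℝ] ℝ).hasFDerivAt.add_const (x k)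
    refine h1.congr_of_eventuallyEq ?_
    -- Strict optimality of `k` persists near `v`, so there the maximum is the `k`-th term.
    have h2 : ∀ᶠ v' in nhds v, ∀ j, j ≠ k → v' j + x j < v' k + x k := by
      rw [Filter.eventually_all]; intro j
      by_cases hj : j = k
      · simp [hj]
      · have hc : ∀ i, Continuous fun v' : Fin N → ℝ => v' i + x i := fun i => by fun_prop
        have h := (isOpen_lt (hc j) (hc k)).mem_nhds (show v ∈ _ from hk j hj)
        exact Filter.mem_of_superset h fun _ h _ => h
    filter_upwards [h2] with v' hv'
    refine le_antisymm (ciSup_le fun j => ?_)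
      (le_ciSup (f := fun i => v' i + x i) (Set.finite_range _).bddAbove k)
    exact (mem_bestSet_iff hv' k).2 rfl j

lemma fderiv_surplus_single {N : ℕ} [Nonempty (Fin N)] (μ : Measure (Fin N → ℝ))
    [IsProbabilityMeasure μ] (hac : μ ≪ volume) (hint : ∀ i, Integrable (fun x => x i) μ)
    (v : Fin N → ℝ) (i : Fin N) :
    fderiv ℝ (surplus N μ) v (Pi.single i 1) = choiceProb N μ v i := by
  rw [(hasFDerivAt_surplus μ hac hint v).fderiv]
  simp [Pi.single_apply]

lemma genH_eq {N : ℕ} [Nonempty (Fin N)] (μ : Measure (Fin N → ℝ))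
    [IsProbabilityMeasure μ] (hac : μ ≪ volume) (hint : ∀ i, Integrable (fun x => x i) μ)
    (y : Fin N → ℝ) (i : Fin N) :
    genH N μ y i = Real.exp (surplus N μ (fun j => Real.log (y j))) *
      choiceProb N μ (fun j => Real.log (y j)) i := by
  unfold genH
  rw [((hasFDerivAt_surplus μ hac hint _).exp).fderiv]
  simp [Pi.single_apply]

lemma bestSet_add_subset {N : ℕ} {v : Fin N → ℝ} {a : Fin N} (hv : ∀ i, v a ≤ v i)
    (u : Fin N → ℝ) : bestSet (fun j => v j + u j) a ⊆ bestSet u a := by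
  intro x hx j
  have h1 := hx j
  have h2 := hv j
  simp only at h1
  linarith

lemma choiceProb_add_le {N : ℕ} (μ : Measure (Fin N → ℝ)) [IsProbabilityMeasure μ]
    {v : Fin N → ℝ} {a : Fin N} (hv : ∀ i, v a ≤ v i) (u : Fin N → ℝ) :
    choiceProb N μ (fun j => v j + u j) a ≤ choiceProb N μ u a :=
  measureReal_mono (bestSet_add_subset hv u)

/-- The event that `a` is strictly optimal at `u` but beaten by `b` at `v + u` is open and
nonempty, so by full support the choice probability of `a` drops strictly. -/
lemma choiceProb_add_lt {N : ℕ} (μ : Measure (Fin N → ℝ)) [IsProbabilityMeasure μ]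
    (hsupp : ∀ U : Set (Fin N → ℝ), IsOpen U → U.Nonempty → 0 < μ U)
    {v : Fin N → ℝ} {a b : Fin N} (hba : b ≠ a) (hv : ∀ i, v a ≤ v i) (hab : v a < v b)
    (u : Fin N → ℝ) :
    choiceProb N μ (fun j => v j + u j) a < choiceProb N μ u a := by
  set U : Set (Fin N → ℝ) := {x | (∀ j, j ≠ a → u j + x j < u a + x a) ∧
    v a + u a + x a < v b + u b + x b} with hU
  have hopen : IsOpen U := by
    have h : U = (⋂ j, ⋂ (_ : j ≠ a), {x | u j + x j < u a + x a}) ∩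
        {x | v a + u a + x a < v b + u b + x b} := by
      ext x; simp [hU]
    rw [h]
    exact (isOpen_iInter_of_finite fun j => isOpen_iInter_of_finite fun _ =>
      isOpen_lt (by fun_prop) (by fun_prop)).inter (isOpen_lt (by fun_prop) (by fun_prop))
  have hne : U.Nonempty := by
    -- The shocks equalize all options at `u`, up to an advantage for `a` too small to survive `v`.
    refine ⟨fun j => if j = a then - u a else - u j - (v b - v a) / 2, fun j hj => ?_, ?_⟩
    · simp only [hj, if_true, if_false]
      linarith
    · simp only [hba, if_true, if_false]
      linarith
  have hdisj : Disjoint (bestSet (fun j => v j + u j) a) U := by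
    rw [Set.disjoint_left]
    intro x hx hxU
    exact absurd hxU.2 (not_lt.2 (hx b))
  have hsub : bestSet (fun j => v j + u j) a ∪ U ⊆ bestSet u a :=
    Set.union_subset (bestSet_add_subset hv u) fun x hx => (mem_bestSet_iff hx.1 a).2 rfl
  have h1 : μ.real (bestSet (fun j => v j + u j) a) + μ.real U ≤ μ.real (bestSet u a) := by
    rw [← measureReal_union hdisj hopen.measurableSet]
    exact measureReal_mono hsub
  have h2 : 0 < μ.real U := ENNReal.toReal_pos (hsupp U hopen hne).ne' (measure_ne_top μ U)
  change μ.real (bestSet (fun j => v j + u j) a) < μ.real (bestSet u a)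
  linarith

/-- Corollary 1: let `S` be a right inverse of `H`, and suppose option `a` is
weakly worst in every state of the world and strictly worst in some state with positive prior
probability. Then no `p⁰` in the relative interior of `Δ` satisfies the GERI fixed-point
equation `p⁰ = ∑_{v ∈ 𝒱} μ(v) ∇W(v + log S(p⁰))`; i.e. any solution of the GERI model puts
unconditional probability zero on option `a`. -/
theorem geri_worst_option_excluded (N : ℕ) (hN : 2 ≤ N) (μ : Measure (Fin N → ℝ))
    (hprob : IsProbabilityMeasure μ) (hac : μ ≪ volume)
    (hsupp : ∀ U : Set (Fin N → ℝ), IsOpen U → U.Nonempty → 0 < μ U)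
    (hint : ∀ i, Integrable (fun x => x i) μ)
    (V : Finset (Fin N → ℝ)) (w : (Fin N → ℝ) → ℝ)
    (hw0 : ∀ v ∈ V, 0 ≤ w v) (hw1 : ∑ v ∈ V, w v = 1)
    (S : (Fin N → ℝ) → (Fin N → ℝ))
    (hSpos : ∀ q ∈ unitSimplexRI N, ∀ i, 0 < S q i)
    (hSright : ∀ q ∈ unitSimplexRI N, ∀ i, genH N μ (S q) i = q i)
    (a : Fin N)
    (hdom : ∀ v ∈ V, ∀ i, v a ≤ v i)
    (hstrict : ∃ v ∈ V, 0 < w v ∧ ∀ i, i ≠ a → v a < v i) :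
    ∀ p0 ∈ unitSimplexRI N,
      ¬ (∀ i, p0 i = ∑ v ∈ V, w v *
          fderiv ℝ (surplus N μ) (fun j => v j + Real.log (S p0 j)) (Pi.single i 1)) := by
  intro p0 hp0 hfix
  have : Nonempty (Fin N) := ⟨a⟩
  have : Nontrivial (Fin N) := Fin.nontrivial_iff_two_le.2 hN
  set u : Fin N → ℝ := fun j => Real.log (S p0 j) with hu
  have hp : ∀ i, Real.exp (surplus N μ u) * choiceProb N μ u i = p0 i := fun i => by
    rw [← hSright p0 hp0 i, genH_eq μ hac hint]
  have hexp : Real.exp (surplus N μ u) = 1 := by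
    have h := hp0.2
    simp_rw [← hp, ← Finset.mul_sum, sum_choiceProb μ hac, mul_one] at h
    exact h
  have hpa : choiceProb N μ u a = p0 a := by rw [← hp a, hexp, one_mul]
  have hfa := hfix a
  obtain ⟨v, hvV, hwv, hvs⟩ := hstrict
  obtain ⟨b, hba⟩ := exists_ne a
  have hlt : ∑ v ∈ V, w v * fderiv ℝ (surplus N μ)
      (fun j => v j + Real.log (S p0 j)) (Pi.single a 1) < ∑ v ∈ V, w v * p0 a := by
    simp_rw [fderiv_surplus_single μ hac hint, ← hpa]
    refine Finset.sum_lt_sum (fun v' hv' => ?_) ⟨v, hvV, ?_⟩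
    · exact mul_le_mul_of_nonneg_left (choiceProb_add_le μ (hdom v' hv') u) (hw0 v' hv')
    · exact mul_lt_mul_of_pos_left
        (choiceProb_add_lt μ hsupp hba (hdom v hvV) (hvs b hba) u) hwv
  rw [← Finset.sum_mul, hw1, one_mul] at hlt
  exact absurd hfa hlt.ne'
end
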